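/- Let β ∈ (1,2), λ ∈ ℂ, c₁, c₂ ∈ ℂ, and define u(t) = c₁ E_{β,1}(−λ t^β) + c₂ t E_{β,2}(−λ t^β) for t ≥ 0. Then u(0) = c₁, u′(0) = c₂, u is twice differentiable on (0,∞) with u″ integrable near 0, and for every t > 0 the Caputo fractional derivative of order β of u satisfies (1/Γ(2−β)) ∫₀^t u″(τ) (t−τ)^{1−β} dτ = −λ u(t). -/

import Mathlib

open scoped Real
open MeasureTheory

/-- Generalized Mittag-Leffler function `E_{α,γ}(z) = ∑ zⁿ / Γ(αn + γ)`. -/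
noncomputable def mittagLeffler (α γ : ℝ) (z : ℂ) : ℂ :=
  ∑' n : ℕ, z ^ n / (Real.Gamma (α * n + γ) : ℂ)

/-! Write `e_γ(t) = t^{γ-1} E_{α,γ}(c t^α) = ∑ cⁿ t^{αn+γ-1} / Γ(αn+γ)`. Termwise, `e_γ' = e_{γ-1}`
for every real `γ`, and for `γ > 0` the beta integral shows that the fractional integral of order
`a` sends `e_γ` to `e_{γ+a}`. With `α = β` and `c = -λ`, the function is `u = c₁ e₁ + c₂ e₂`, so
`u″ = c₁ e₋₁ + c₂ e₀`. As `1/Γ` vanishes at `-1` and `0`, shifting the series gives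
`e₋₁ = c e_{β-1}` and `e₀ = c e_β`: these are integrable at `0`, and the fractional integral of
order `2 - β` takes `u″ = c (c₁ e_{β-1} + c₂ e_β)` to `c (c₁ e₁ + c₂ e₂) = -λ u`.

Mathlib's junk values `Γ(-n) = 0` and `x / 0 = 0` give `1/Γ` its correct value `0` at the poles of
`Γ`, which is why the index `γ` may be an arbitrary real number. -/

lemma rpow_mul_exp_neg_le_Gamma {R x : ℝ} (hR : 0 ≤ R) (hx : 1 ≤ x) :
    R ^ (x - 1) * Real.exp (-R) ≤ Real.Gamma x := by
  have hinteg := Real.GammaIntegral_convergent (zero_lt_one.trans_le hx)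
  have hsub : Set.Ioi R ⊆ Set.Ioi 0 := Set.Ioi_subset_Ioi hR
  calc R ^ (x - 1) * Real.exp (-R)
      = ∫ t in Set.Ioi R, Real.exp (-t) * R ^ (x - 1) := by
        rw [integral_mul_const, integral_exp_neg_Ioi, mul_comm]
    _ ≤ ∫ t in Set.Ioi R, Real.exp (-t) * t ^ (x - 1) := by
        refine setIntegral_mono_on ((integrableOn_exp_neg_Ioi R).mul_const _)
          (hinteg.mono_set hsub) measurableSet_Ioi fun t (ht : R < t) ↦ ?_
        have : 0 ≤ x - 1 := sub_nonneg.2 hx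
        gcongr
    _ ≤ ∫ t in Set.Ioi 0, Real.exp (-t) * t ^ (x - 1) := by
        refine setIntegral_mono_set hinteg ?_ hsub.eventuallyLE
        filter_upwards [ae_restrict_mem measurableSet_Ioi] with t ht
        have : 0 < t := ht
        simp only [Pi.zero_apply]
        positivity
    _ = Real.Gamma x := (Real.Gamma_eq_integral (zero_lt_one.trans_le hx)).symm

lemma ofReal_div_Gamma_add_one (s : ℝ) :
    (s : ℂ) / (Real.Gamma (s + 1) : ℂ) = 1 / (Real.Gamma s : ℂ) := by
  simpa [← Complex.Gamma_ofReal, div_eq_mul_inv] using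
    (Complex.one_div_Gamma_eq_self_mul_one_div_Gamma_add_one (s : ℂ)).symm

lemma norm_pow_div_Gamma_le (α γ : ℝ) {r : ℝ} {z : ℂ} (hz : z ∈ Metric.ball 0 r) (n : ℕ) :
    ‖z ^ n / (Real.Gamma (α * n + γ) : ℂ)‖ ≤ ‖(r : ℂ) ^ n / (Real.Gamma (α * n + γ) : ℂ)‖ := by
  have hzr : ‖z‖ ≤ ‖(r : ℂ)‖ := by
    simpa using (mem_ball_zero_iff.1 hz).le.trans (le_abs_self r)
  simp only [norm_div, norm_pow]
  gcongr

section PowerSeries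

variable {α : ℝ} (hα : 0 < α) (γ : ℝ)

include hα

lemma summable_pow_div_Gamma (z : ℂ) :
    Summable fun n : ℕ ↦ z ^ n / (Real.Gamma (α * n + γ) : ℂ) := by
  set R : ℝ := (2 * ‖z‖ + 1) ^ α⁻¹
  have hR : 0 < R := by positivity
  have hRα : R ^ α = 2 * ‖z‖ + 1 := Real.rpow_inv_rpow (by positivity) hα.ne'
  have hgeom : Summable fun n : ℕ ↦ R ^ (1 - γ) * Real.exp R * (‖z‖ / R ^ α) ^ n := by
    refine (summable_geometric_of_lt_one (by positivity) ?_).mul_left _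
    rw [hRα, div_lt_one (by positivity)]
    linarith [norm_nonneg z]
  have hlarge : ∀ᶠ n : ℕ in Filter.atTop, 1 ≤ α * n + γ :=
    (Filter.tendsto_atTop_add_const_right _ _
      (tendsto_natCast_atTop_atTop.const_mul_atTop hα)).eventually_ge_atTop 1
  refine hgeom.of_norm_bounded_eventually_nat ?_
  filter_upwards [hlarge] with n hn
  have hΓ := rpow_mul_exp_neg_le_Gamma hR.le hn
  calc ‖z ^ n / (Real.Gamma (α * n + γ) : ℂ)‖
      = ‖z‖ ^ n / Real.Gamma (α * n + γ) := by
        rw [norm_div, norm_pow, Complex.norm_real,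
          Real.norm_of_nonneg (le_trans (by positivity) hΓ)]
    _ ≤ ‖z‖ ^ n / (R ^ (α * n + γ - 1) * Real.exp (-R)) := by gcongr
    _ = R ^ (1 - γ) * Real.exp R * (‖z‖ / R ^ α) ^ n := by
        rw [show α * n + γ - 1 = α * n - (1 - γ) by ring, Real.rpow_sub hR, Real.rpow_mul hR.le,
          Real.rpow_natCast, Real.exp_neg, div_pow]
        field_simp

lemma hasSum_mittagLeffler (z : ℂ) :
    HasSum (fun n : ℕ ↦ z ^ n / (Real.Gamma (α * n + γ) : ℂ)) (mittagLeffler α γ z) :=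
  (summable_pow_div_Gamma hα γ z).hasSum

lemma differentiable_mittagLeffler : Differentiable ℂ (mittagLeffler α γ) := fun z ↦
  (Complex.differentiableOn_tsum_of_summable_norm
    (summable_pow_div_Gamma hα γ ((‖z‖ + 1 : ℝ) : ℂ)).norm (fun _ ↦ by fun_prop) Metric.isOpen_ball
    fun n _ hw ↦ norm_pow_div_Gamma_le α γ hw n).differentiableAt
    (Metric.isOpen_ball.mem_nhds (by simp))

lemma hasSum_deriv_mittagLeffler (z : ℂ) :
    HasSum (fun n : ℕ ↦ n * z ^ (n - 1) / (Real.Gamma (α * n + γ) : ℂ))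
      (deriv (mittagLeffler α γ) z) := by
  simpa [mittagLeffler] using! Complex.hasSum_deriv_of_summable_norm
    (summable_pow_div_Gamma hα γ ((‖z‖ + 1 : ℝ) : ℂ)).norm (fun _ ↦ by fun_prop) Metric.isOpen_ball
    (fun n _ hw ↦ norm_pow_div_Gamma_le α γ hw n) (show z ∈ Metric.ball 0 (‖z‖ + 1) by simp)

lemma mittagLeffler_eq_add (z : ℂ) :
    mittagLeffler α γ z = 1 / (Real.Gamma γ : ℂ) + z * mittagLeffler α (α + γ) z := by
  rw [mittagLeffler, (summable_pow_div_Gamma hα γ z).tsum_eq_zero_add, mittagLeffler,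
    ← tsum_mul_left]
  congr 1
  · simp
  · refine tsum_congr fun n ↦ ?_
    rw [pow_succ', mul_div_assoc]
    congr 4
    push_cast
    ring

lemma mittagLeffler_sub_one (z : ℂ) :
    mittagLeffler α (γ - 1) z =
      (γ - 1) * mittagLeffler α γ z + α * z * deriv (mittagLeffler α γ) z := by
  refine HasSum.unique (hasSum_mittagLeffler hα (γ - 1) z) ?_
  convert! ((hasSum_mittagLeffler hα γ z).mul_left ((γ : ℂ) - 1)).add
    ((hasSum_deriv_mittagLeffler hα γ z).mul_left (α * z)) using 2 with n
  have hz : z * (n * z ^ (n - 1)) = n * z ^ n := by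
    cases n with
    | zero => simp
    | succ n => rw [Nat.add_sub_cancel, pow_succ']; ring
  have hΓ := ofReal_div_Gamma_add_one (α * n + (γ - 1))
  rw [show α * n + (γ - 1) + 1 = α * n + γ by ring] at hΓ
  calc z ^ n / (Real.Gamma (α * n + (γ - 1)) : ℂ)
      = z ^ n * ((α * n + (γ - 1) : ℝ) / (Real.Gamma (α * n + γ) : ℂ)) := by rw [hΓ, mul_one_div]
    _ = (γ - 1) * (z ^ n / (Real.Gamma (α * n + γ) : ℂ)) +
          α * (n * z ^ n) / (Real.Gamma (α * n + γ) : ℂ) := by push_cast; ring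
    _ = _ := by rw [← hz]; ring

end PowerSeries

lemma mittagLeffler_zero (α γ : ℝ) : mittagLeffler α γ 0 = 1 / (Real.Gamma γ : ℂ) := by
  rw [mittagLeffler, tsum_eq_single 0 fun n hn ↦ by simp [hn]]
  simp

lemma hasDerivAt_mittagLeffler_rpow {α : ℝ} (hα : 0 < α) (γ : ℝ) (c : ℂ) {t : ℝ}
    (ht : t ≠ 0 ∨ 1 ≤ α) :
    HasDerivAt (fun s : ℝ ↦ mittagLeffler α γ (c * ((s ^ α : ℝ) : ℂ)))
      (deriv (mittagLeffler α γ) (c * ((t ^ α : ℝ) : ℂ)) * (c * (α * t ^ (α - 1) : ℝ))) t :=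
  (differentiable_mittagLeffler hα γ _).hasDerivAt.comp t
    ((Real.hasDerivAt_rpow_const ht).ofReal_comp.const_mul c)

lemma continuous_mittagLeffler_rpow {α : ℝ} (hα : 0 < α) (γ : ℝ) (c : ℂ) :
    Continuous fun t : ℝ ↦ mittagLeffler α γ (c * ((t ^ α : ℝ) : ℂ)) :=
  (differentiable_mittagLeffler hα γ).continuous.comp <| continuous_const.mul <|
    Complex.continuous_ofReal.comp <| Real.continuous_rpow_const hα.le

/-- The function `t^{γ-1} E_{α,γ}(c t^α)` of `t > 0`, whose index `γ` is lowered by one by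
differentiation and raised by `a` by fractional integration of order `a`. -/
noncomputable def mittagLefflerKernel (α γ : ℝ) (c : ℂ) (t : ℝ) : ℂ :=
  ((t ^ (γ - 1) : ℝ) : ℂ) * mittagLeffler α γ (c * ((t ^ α : ℝ) : ℂ))

section Kernel

variable {α : ℝ} (hα : 0 < α) (γ : ℝ) (c : ℂ) {t : ℝ} (ht : 0 < t)

include hα ht

lemma hasDerivAt_mittagLefflerKernel :
    HasDerivAt (mittagLefflerKernel α γ c) (mittagLefflerKernel α (γ - 1) c t) t := by
  have hpow : HasDerivAt (fun s : ℝ ↦ ((s ^ (γ - 1) : ℝ) : ℂ))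
      (((γ - 1) * t ^ (γ - 1 - 1) : ℝ) : ℂ) t :=
    (Real.hasDerivAt_rpow_const (Or.inl ht.ne')).ofReal_comp
  refine (hpow.mul (hasDerivAt_mittagLeffler_rpow hα γ c (Or.inl ht.ne'))).congr_deriv ?_
  rw [mittagLefflerKernel, mittagLeffler_sub_one hα, Real.rpow_sub_one ht.ne' (γ - 1),
    Real.rpow_sub_one ht.ne' α]
  have : (t : ℂ) ≠ 0 := Complex.ofReal_ne_zero.2 ht.ne'
  push_cast
  field_simp

lemma mittagLefflerKernel_eq_add :
    mittagLefflerKernel α γ c t =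
      (t ^ (γ - 1) : ℝ) / (Real.Gamma γ : ℂ) + c * mittagLefflerKernel α (α + γ) c t := by
  simp only [mittagLefflerKernel]
  rw [mittagLeffler_eq_add hα γ, show α + γ - 1 = γ - 1 + α by ring, Real.rpow_add ht]
  push_cast
  ring

lemma hasSum_mittagLefflerKernel :
    HasSum (fun n : ℕ ↦ c ^ n / (Real.Gamma (α * n + γ) : ℂ) * ((t ^ (α * n + γ - 1) : ℝ) : ℂ))
      (mittagLefflerKernel α γ c t) := by
  convert! (hasSum_mittagLeffler hα γ (c * ((t ^ α : ℝ) : ℂ))).mul_left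
    ((t ^ (γ - 1) : ℝ) : ℂ) using 2 with n
  rw [show α * n + γ - 1 = γ - 1 + α * n by ring, Real.rpow_add ht, Real.rpow_mul ht.le,
    Real.rpow_natCast]
  push_cast
  ring

end Kernel

lemma hasSum_mul_integral_of_nonneg {X : Type*} [MeasurableSpace X] {μ : Measure X}
    {b : ℕ → ℂ} {k : ℕ → X → ℝ} (hk : ∀ n, Integrable (k n) μ) (hk_nonneg : ∀ n, 0 ≤ᵐ[μ] k n)
    (hb : Summable fun n ↦ b n * ((∫ x, k n x ∂μ : ℝ) : ℂ)) :
    HasSum (fun n ↦ b n * ((∫ x, k n x ∂μ : ℝ) : ℂ)) (∫ x, ∑' n, b n * (k n x : ℂ) ∂μ) := by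
  have hbk (n : ℕ) : Integrable (fun x ↦ b n * (k n x : ℂ)) μ := (hk n).ofReal.const_mul (b n)
  have hnorm (n : ℕ) : ∫ x, ‖b n * (k n x : ℂ)‖ ∂μ = ‖b n * ((∫ x, k n x ∂μ : ℝ) : ℂ)‖ := by
    rw [norm_mul, Complex.norm_real, Real.norm_of_nonneg (integral_nonneg_of_ae (hk_nonneg n)),
      ← integral_const_mul]
    refine integral_congr_ae ?_
    filter_upwards [hk_nonneg n] with x hx
    rw [norm_mul, Complex.norm_real, Real.norm_of_nonneg hx]
  simpa only [integral_const_mul, integral_complex_ofReal] using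
    hasSum_integral_of_summable_integral_norm hbk (by simpa only [hnorm] using hb.norm)

lemma integral_rpow_mul_sub_rpow {p q t : ℝ} (hp : 0 < p) (hq : 0 < q) (ht : 0 < t) :
    ∫ x in 0..t, x ^ (p - 1) * (t - x) ^ (q - 1) =
      t ^ (p + q - 1) * ProbabilityTheory.beta p q := by
  apply Complex.ofReal_injective
  calc ((∫ x in 0..t, x ^ (p - 1) * (t - x) ^ (q - 1) : ℝ) : ℂ)
      = ∫ x in 0..t, (x : ℂ) ^ ((p : ℂ) - 1) * ((t : ℂ) - x) ^ ((q : ℂ) - 1) := by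
        rw [← intervalIntegral.integral_ofReal]
        refine intervalIntegral.integral_congr fun x hx ↦ ?_
        rw [Set.uIcc_of_le ht.le] at hx
        simp [Complex.ofReal_cpow hx.1, Complex.ofReal_cpow (sub_nonneg.2 hx.2)]
    _ = ((t ^ (p + q - 1) * ProbabilityTheory.beta p q : ℝ) : ℂ) := by
        rw [Complex.betaIntegral_scaled _ _ ht,
          Complex.betaIntegral_eq_Gamma_mul_div _ _ (by simpa) (by simpa), ← Complex.ofReal_add]
        simp only [ProbabilityTheory.beta, Complex.Gamma_ofReal]
        push_cast [Complex.ofReal_cpow ht.le]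
        rfl

lemma intervalIntegrable_rpow_mul_sub_rpow {p q t : ℝ} (hp : 0 < p) (hq : 0 < q) (ht : 0 < t) :
    IntervalIntegrable (fun x ↦ x ^ (p - 1) * (t - x) ^ (q - 1)) volume 0 t := by
  apply intervalIntegral.intervalIntegrable_of_integral_ne_zero
  rw [integral_rpow_mul_sub_rpow hp hq ht]
  have := ProbabilityTheory.beta_pos hp hq
  positivity

/-- The Riemann–Liouville fractional integral of order `a` based at `0`; the Caputo derivative of
order `β ∈ (1, 2)` of `u` is the one of order `2 - β` of `u″`. -/
noncomputable def riemannLiouvilleIntegral (a : ℝ) (f : ℝ → ℂ) (t : ℝ) : ℂ :=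
  1 / (Real.Gamma a : ℂ) * ∫ τ in 0..t, f τ * (((t - τ) ^ (a - 1) : ℝ) : ℂ)

lemma riemannLiouvilleIntegral_congr {a t : ℝ} {f g : ℝ → ℂ} (ht : 0 ≤ t)
    (hfg : ∀ τ ∈ Set.Ioc 0 t, f τ = g τ) :
    riemannLiouvilleIntegral a f t = riemannLiouvilleIntegral a g t := by
  rw [riemannLiouvilleIntegral, riemannLiouvilleIntegral]
  congr 1
  refine intervalIntegral.integral_congr_ae (.of_forall fun τ hτ ↦ ?_)
  rw [hfg τ (Set.uIoc_of_le ht ▸ hτ)]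

lemma riemannLiouvilleIntegral_const_mul (a : ℝ) (b : ℂ) (f : ℝ → ℂ) (t : ℝ) :
    riemannLiouvilleIntegral a (fun τ ↦ b * f τ) t = b * riemannLiouvilleIntegral a f t := by
  simp only [riemannLiouvilleIntegral, mul_assoc, intervalIntegral.integral_const_mul]
  ring

lemma riemannLiouvilleIntegral_add {a t : ℝ} {f g : ℝ → ℂ}
    (hf : IntervalIntegrable (fun τ ↦ f τ * (((t - τ) ^ (a - 1) : ℝ) : ℂ)) volume 0 t)
    (hg : IntervalIntegrable (fun τ ↦ g τ * (((t - τ) ^ (a - 1) : ℝ) : ℂ)) volume 0 t) :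
    riemannLiouvilleIntegral a (fun τ ↦ f τ + g τ) t =
      riemannLiouvilleIntegral a f t + riemannLiouvilleIntegral a g t := by
  simp only [riemannLiouvilleIntegral, add_mul, intervalIntegral.integral_add hf hg, mul_add]

section FractionalIntegral

variable {α γ a t : ℝ} (hα : 0 < α) (hγ : 0 < γ) (ha : 0 < a) (c : ℂ) (ht : 0 < t)

include hα hγ ha ht

lemma intervalIntegrable_mittagLefflerKernel_mul_sub_rpow :
    IntervalIntegrable (fun τ ↦ mittagLefflerKernel α γ c τ * (((t - τ) ^ (a - 1) : ℝ) : ℂ))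
      volume 0 t := by
  have hbeta : IntervalIntegrable
      (fun τ ↦ ((τ ^ (γ - 1) * (t - τ) ^ (a - 1) : ℝ) : ℂ)) volume 0 t :=
    intervalIntegrable_iff.2 (intervalIntegrable_rpow_mul_sub_rpow hγ ha ht).def'.ofReal
  refine (hbeta.mul_continuousOn (continuous_mittagLeffler_rpow hα γ c).continuousOn).congr ?_
  intro τ _
  simp only [mittagLefflerKernel]
  push_cast
  ring

lemma integral_mittagLefflerKernel_mul_sub_rpow :
    ∫ τ in 0..t, mittagLefflerKernel α γ c τ * (((t - τ) ^ (a - 1) : ℝ) : ℂ) =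
      Real.Gamma a * mittagLefflerKernel α (γ + a) c t := by
  have hp (n : ℕ) : 0 < α * n + γ := by positivity
  let b (n : ℕ) : ℂ := c ^ n / (Real.Gamma (α * n + γ) : ℂ)
  let k (n : ℕ) (τ : ℝ) : ℝ := τ ^ (α * n + γ - 1) * (t - τ) ^ (a - 1)
  have hk_int (n : ℕ) : IntegrableOn (k n) (Set.Ioc 0 t) :=
    (intervalIntegrable_iff_integrableOn_Ioc_of_le ht.le).1
      (intervalIntegrable_rpow_mul_sub_rpow (hp n) ha ht)
  have hk_nonneg (n : ℕ) : 0 ≤ᵐ[volume.restrict (Set.Ioc 0 t)] k n :=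
    ae_restrict_of_forall_mem measurableSet_Ioc fun τ hτ ↦
      mul_nonneg (Real.rpow_nonneg hτ.1.le _) (Real.rpow_nonneg (sub_nonneg.2 hτ.2) _)
  have hterms : HasSum (fun n ↦ b n * ((∫ τ in Set.Ioc 0 t, k n τ : ℝ) : ℂ))
      (Real.Gamma a * mittagLefflerKernel α (γ + a) c t) := by
    convert! (hasSum_mittagLefflerKernel hα (γ + a) c ht).mul_left (Real.Gamma a : ℂ) using 2 with n
    have : (Real.Gamma (α * n + γ) : ℂ) ≠ 0 :=
      Complex.ofReal_ne_zero.2 (Real.Gamma_pos_of_pos (hp n)).ne'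
    rw [← intervalIntegral.integral_of_le ht.le, integral_rpow_mul_sub_rpow (hp n) ha ht,
      ProbabilityTheory.beta, add_assoc]
    simp only [b]
    push_cast
    field_simp
  have hintegral : ∫ τ in 0..t, mittagLefflerKernel α γ c τ * (((t - τ) ^ (a - 1) : ℝ) : ℂ) =
      ∫ τ in Set.Ioc 0 t, ∑' n, b n * (k n τ : ℂ) := by
    rw [intervalIntegral.integral_of_le ht.le]
    refine setIntegral_congr_fun measurableSet_Ioc fun τ hτ ↦ ?_
    rw [← ((hasSum_mittagLefflerKernel hα γ c hτ.1).mul_right _).tsum_eq]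
    simp [b, k, mul_assoc]
  rw [hintegral]
  exact (hasSum_mul_integral_of_nonneg hk_int hk_nonneg hterms.summable).unique hterms

lemma riemannLiouvilleIntegral_mittagLefflerKernel :
    riemannLiouvilleIntegral a (mittagLefflerKernel α γ c) t =
      mittagLefflerKernel α (γ + a) c t := by
  rw [riemannLiouvilleIntegral, integral_mittagLefflerKernel_mul_sub_rpow hα hγ ha c ht,
    ← mul_assoc, one_div_mul_cancel, one_mul]
  exact Complex.ofReal_ne_zero.2 (Real.Gamma_pos_of_pos ha).ne'

end FractionalIntegral

/-- The combination `c₁ e_γ + c₂ e_{γ+1}` of the kernels `e_γ = mittagLefflerKernel α γ c`. The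
solution of the Caputo equation has `γ = 1`, its first two derivatives `γ = 0` and `γ = -1`. -/
noncomputable def mittagLefflerSolution (α γ : ℝ) (c c₁ c₂ : ℂ) (t : ℝ) : ℂ :=
  c₁ * mittagLefflerKernel α γ c t + c₂ * mittagLefflerKernel α (γ + 1) c t

section Solution

variable {α : ℝ} (c c₁ c₂ : ℂ) {t : ℝ}

lemma mittagLefflerSolution_one (t : ℝ) :
    mittagLefflerSolution α 1 c c₁ c₂ t =
      c₁ * mittagLeffler α 1 (c * ((t ^ α : ℝ) : ℂ)) +
        c₂ * t * mittagLeffler α 2 (c * ((t ^ α : ℝ) : ℂ)) := by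
  norm_num [mittagLefflerSolution, mittagLefflerKernel, mul_assoc]

lemma mittagLefflerSolution_one_zero (hα : α ≠ 0) : mittagLefflerSolution α 1 c c₁ c₂ 0 = c₁ := by
  simp [mittagLefflerSolution_one, Real.zero_rpow hα, mittagLeffler_zero]

lemma hasDerivAt_mittagLefflerSolution_one_zero (hα : 1 < α) :
    HasDerivAt (mittagLefflerSolution α 1 c c₁ c₂) c₂ 0 := by
  have hα0 : 0 < α := zero_lt_one.trans hα
  have hE (γ : ℝ) : HasDerivAt (fun s : ℝ ↦ mittagLeffler α γ (c * ((s ^ α : ℝ) : ℂ))) 0 0 := by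
    simpa [Real.zero_rpow (sub_pos.2 hα).ne'] using
      hasDerivAt_mittagLeffler_rpow hα0 γ c (t := 0) (.inr hα.le)
  rw [funext (mittagLefflerSolution_one c c₁ c₂)]
  convert! ((hE 1).const_mul c₁).add
    (((hasDerivAt_id (0 : ℝ)).ofReal_comp.const_mul c₂).mul (hE 2)) using 1
  simp [Real.zero_rpow hα0.ne', mittagLeffler_zero]

lemma hasDerivAt_mittagLefflerSolution (hα : 0 < α) (γ : ℝ) (ht : 0 < t) :
    HasDerivAt (mittagLefflerSolution α γ c c₁ c₂)
      (mittagLefflerSolution α (γ - 1) c c₁ c₂ t) t := by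
  have h := ((hasDerivAt_mittagLefflerKernel hα γ c ht).const_mul c₁).add
    ((hasDerivAt_mittagLefflerKernel hα (γ + 1) c ht).const_mul c₂)
  rwa [add_sub_right_comm] at h

lemma mittagLefflerSolution_neg_one (hα : 0 < α) (ht : 0 < t) :
    mittagLefflerSolution α (-1) c c₁ c₂ t = c * mittagLefflerSolution α (α - 1) c c₁ c₂ t := by
  have hΓ : Real.Gamma (-1) = 0 := by simpa using Real.Gamma_neg_nat_eq_zero 1
  rw [mittagLefflerSolution, neg_add_cancel, mittagLefflerKernel_eq_add hα _ c ht,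
    mittagLefflerKernel_eq_add hα 0 c ht, hΓ, Real.Gamma_zero, mittagLefflerSolution]
  simp only [Complex.ofReal_zero, div_zero, zero_add, add_zero, ← sub_eq_add_neg, sub_add_cancel]
  ring

lemma hasDerivAt_deriv_mittagLefflerSolution_one (hα : 0 < α) (ht : 0 < t) :
    HasDerivAt (deriv (mittagLefflerSolution α 1 c c₁ c₂))
      (c * mittagLefflerSolution α (α - 1) c c₁ c₂ t) t := by
  have hderiv₀ := hasDerivAt_mittagLefflerSolution c c₁ c₂ hα 0 ht
  rw [zero_sub, mittagLefflerSolution_neg_one c c₁ c₂ hα ht] at hderiv₀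
  refine hderiv₀.congr_of_eventuallyEq ?_
  filter_upwards [Ioi_mem_nhds ht] with s hs
  rw [(hasDerivAt_mittagLefflerSolution c c₁ c₂ hα 1 hs).deriv, sub_self]

lemma intervalIntegrable_mittagLefflerSolution {γ : ℝ} (hα : 0 < α) (hγ : 0 < γ) (ht : 0 < t) :
    IntervalIntegrable (mittagLefflerSolution α γ c c₁ c₂) volume 0 t := by
  have h {δ : ℝ} (hδ : 0 < δ) : IntervalIntegrable (mittagLefflerKernel α δ c) volume 0 t := by
    simpa using intervalIntegrable_mittagLefflerKernel_mul_sub_rpow hα hδ one_pos c ht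
  exact ((h hγ).const_mul c₁).add ((h (by positivity)).const_mul c₂)

lemma riemannLiouvilleIntegral_mittagLefflerSolution {γ a : ℝ} (hα : 0 < α) (hγ : 0 < γ)
    (ha : 0 < a) (ht : 0 < t) :
    riemannLiouvilleIntegral a (mittagLefflerSolution α γ c c₁ c₂) t =
      mittagLefflerSolution α (γ + a) c c₁ c₂ t := by
  have hγ' : 0 < γ + 1 := by positivity
  have hinteg {δ : ℝ} (hδ : 0 < δ) (b : ℂ) : IntervalIntegrable
      (fun τ ↦ b * mittagLefflerKernel α δ c τ * (((t - τ) ^ (a - 1) : ℝ) : ℂ)) volume 0 t := by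
    simpa only [mul_assoc] using
      (intervalIntegrable_mittagLefflerKernel_mul_sub_rpow hα hδ ha c ht).const_mul b
  unfold mittagLefflerSolution
  rw [riemannLiouvilleIntegral_add (hinteg hγ c₁) (hinteg hγ' c₂),
    riemannLiouvilleIntegral_const_mul, riemannLiouvilleIntegral_const_mul,
    riemannLiouvilleIntegral_mittagLefflerKernel hα hγ ha c ht,
    riemannLiouvilleIntegral_mittagLefflerKernel hα hγ' ha c ht, add_right_comm]

end Solution

/-- For `β ∈ (1,2)`, the function `u(t) = c₁ E_{β,1}(-λ t^β) + c₂ t E_{β,2}(-λ t^β)`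
satisfies `u(0) = c₁`, `u′(0) = c₂`, is twice differentiable on `(0,∞)` with `u″`
integrable near `0`, and its Caputo derivative of order `β` equals `-λ u(t)`:
`(1/Γ(2-β)) ∫₀^t u″(τ) (t-τ)^{1-β} dτ = -λ u(t)` for all `t > 0`. -/
theorem caputo_mittagLeffler_eigen_order_two (β : ℝ) (hβ : β ∈ Set.Ioo (1 : ℝ) 2)
    (lam c₁ c₂ : ℂ) (u : ℝ → ℂ)
    (hu : ∀ t : ℝ, u t =
      c₁ * mittagLeffler β 1 (-lam * ((t ^ β : ℝ) : ℂ)) +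
      c₂ * (t : ℂ) * mittagLeffler β 2 (-lam * ((t ^ β : ℝ) : ℂ))) :
    u 0 = c₁ ∧ deriv u 0 = c₂ ∧
      (∀ t : ℝ, 0 < t → DifferentiableAt ℝ u t ∧ DifferentiableAt ℝ (deriv u) t) ∧
      IntegrableOn (deriv (deriv u)) (Set.Ioc 0 1) ∧
      ∀ t : ℝ, 0 < t →
        (1 / (Real.Gamma (2 - β) : ℂ)) *
            ∫ τ in (0 : ℝ)..t, deriv (deriv u) τ * (((t - τ) ^ (1 - β) : ℝ) : ℂ) =
          -lam * u t := by
  obtain ⟨hβ1, hβ2⟩ := hβ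
  have hβ0 : 0 < β := by positivity
  have hβ1' : 0 < β - 1 := sub_pos.2 hβ1
  obtain rfl : u = mittagLefflerSolution β 1 (-lam) c₁ c₂ :=
    funext fun t ↦ (hu t).trans (mittagLefflerSolution_one _ _ _ t).symm
  set v : ℝ → ℝ → ℂ := fun γ ↦ mittagLefflerSolution β γ (-lam) c₁ c₂
  have hv' {t : ℝ} (ht : 0 < t) : HasDerivAt (v 1) (v (1 - 1) t) t :=
    hasDerivAt_mittagLefflerSolution _ _ _ hβ0 1 ht
  have hv'' {t : ℝ} (ht : 0 < t) : HasDerivAt (deriv (v 1)) (-lam * v (β - 1) t) t :=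
    hasDerivAt_deriv_mittagLefflerSolution_one _ _ _ hβ0 ht
  refine ⟨mittagLefflerSolution_one_zero _ _ _ hβ0.ne',
    (hasDerivAt_mittagLefflerSolution_one_zero _ _ _ hβ1).deriv,
    fun t ht ↦ ⟨(hv' ht).differentiableAt, (hv'' ht).differentiableAt⟩, ?_, fun t ht ↦ ?_⟩
  · have hinteg := intervalIntegrable_mittagLefflerSolution (-lam) c₁ c₂ hβ0 hβ1' one_pos
    exact IntegrableOn.congr_fun (hinteg.1.const_mul _) (fun t ht ↦ (hv'' ht.1).deriv.symm)
      measurableSet_Ioc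
  · calc _ = riemannLiouvilleIntegral (2 - β) (deriv (deriv (v 1))) t := by
          rw [riemannLiouvilleIntegral, show 2 - β - 1 = 1 - β by ring]
      _ = -lam * riemannLiouvilleIntegral (2 - β) (v (β - 1)) t := by
          rw [riemannLiouvilleIntegral_congr ht.le fun τ hτ ↦ (hv'' hτ.1).deriv,
            riemannLiouvilleIntegral_const_mul]
      _ = -lam * v 1 t := by
          rw [riemannLiouvilleIntegral_mittagLefflerSolution _ _ _ hβ0 hβ1' (sub_pos.2 hβ2) ht,
            show β - 1 + (2 - β) = 1 by ring]
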